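/- Translation correctness for the sliding-interval pattern 'whenever Ψ1 occurs, Ψ2 occurs within [a,b]': let π be a finite timed trace, Ψ1, Ψ2 state predicates on S, and 0 ≤ a ≤ b ≤ k. Assume that for every index i with t_i ≤ t_0 + (k − b) there is an index m with t_m = t_i + a. Then π ⊨ G_{≤k−b}(Ψ1 ⟹ X_{≤a} F_{≤b−a} Ψ2) if and only if for every index i with t_i ≤ t_0 + (k − b) at which Ψ1(s_i) holds, there exists an index j with t_i + a ≤ t_j ≤ t_i + b such that Ψ2(s_j). -/

import Mathlib

/-!
If some sample `m` satisfies `t m = t i + a`, then `X_{≤a}` evaluated at `i` jumps exactly to `m`,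
and since the time stamps are strictly increasing, the indices reached from `m` by `F_{≤b-a}` are
exactly those with time stamp in `[t m, t m + (b - a)] = [t i + a, t i + b]`.
-/

/-- A finite timed trace: states `s 0, …, s n` with strictly increasing
time stamps `t 0 < t 1 < ⋯ < t n`. -/
structure TTrace (S : Type*) where
  n : ℕ
  s : ℕ → S
  t : ℕ → ℝ
  mono : ∀ i, i < n → t i < t (i + 1)

/-- The suffix `π^i` of a timed trace. -/
def TTrace.suffix {S : Type*} (π : TTrace S) (i : ℕ) : TTrace S where
  n := π.n - i
  s := fun j => π.s (i + j)
  t := fun j => π.t (i + j)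
  mono := fun j hj => π.mono (i + j) (by omega)

/-- A trace property is a predicate on timed traces. -/
abbrev TraceProp (S : Type*) := TTrace S → Prop

/-- A state predicate regarded as a trace property: it holds on `π` iff it holds in `s 0`. -/
def statePred {S : Type*} (Ψ : S → Prop) : TraceProp S := fun π => Ψ (π.s 0)

/-- `π ⊨ G_{≤k} Φ` iff `π^i ⊨ Φ` for every index `i` with `t i ≤ t 0 + k`. -/
def Gle {S : Type*} (k : ℝ) (Φ : TraceProp S) : TraceProp S := fun π =>
  ∀ i, i ≤ π.n → π.t i ≤ π.t 0 + k → Φ (π.suffix i)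

/-- `π ⊨ F_{≤k} Φ` iff `π^i ⊨ Φ` for some index `i` with `t i ≤ t 0 + k`. -/
def Fle {S : Type*} (k : ℝ) (Φ : TraceProp S) : TraceProp S := fun π =>
  ∃ i, i ≤ π.n ∧ π.t i ≤ π.t 0 + k ∧ Φ (π.suffix i)

/-- `π ⊨ X_{≤k} Φ` iff `π^m ⊨ Φ` for `m` the largest index with `t m ≤ t 0 + k`. -/
noncomputable def Xle {S : Type*} (k : ℝ) (Φ : TraceProp S) : TraceProp S := fun π =>
  Φ (π.suffix (@Nat.findGreatest (fun i => π.t i ≤ π.t 0 + k) (Classical.decPred _) π.n))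

def pImp {S : Type*} (Φ1 Φ2 : TraceProp S) : TraceProp S := fun π => Φ1 π → Φ2 π
def pNot {S : Type*} (Φ : TraceProp S) : TraceProp S := fun π => ¬ Φ π
def pAnd {S : Type*} (Φ1 Φ2 : TraceProp S) : TraceProp S := fun π => Φ1 π ∧ Φ2 π
def pOr {S : Type*} (Φ1 Φ2 : TraceProp S) : TraceProp S := fun π => Φ1 π ∨ Φ2 π
def pTrue {S : Type*} : TraceProp S := fun _ => True
def pFalse {S : Type*} : TraceProp S := fun _ => False

namespace TTrace

variable {S : Type*} (π : TTrace S)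

theorem strictMonoOn_t : StrictMonoOn π.t (Set.Iic π.n) :=
  strictMonoOn_Iic_of_lt_succ π.mono

theorem suffix_suffix (i j : ℕ) : (π.suffix i).suffix j = π.suffix (i + j) := by
  simp only [suffix, Nat.sub_sub, Nat.add_assoc]

variable {π} {i m : ℕ} {a c : ℝ}

theorem xle_iff_of_t_eq (Φ : TraceProp S) (hm : m ≤ π.n) (hmt : π.t m = π.t 0 + a) :
    Xle a Φ π ↔ Φ (π.suffix m) := by
  have greatest_eq : @Nat.findGreatest (fun j => π.t j ≤ π.t 0 + a)
      (Classical.decPred _) π.n = m := by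
    rw [@Nat.findGreatest_eq_iff]
    refine ⟨hm, fun _ => hmt.le, fun j hmj hj => ?_⟩
    rw [← hmt, not_le]
    exact π.strictMonoOn_t hm hj hmj
  rw [Xle, greatest_eq]

theorem xle_suffix_iff_of_t_eq (Φ : TraceProp S) (him : i ≤ m) (hm : m ≤ π.n)
    (hmt : π.t m = π.t i + a) : Xle a Φ (π.suffix i) ↔ Φ (π.suffix m) := by
  obtain ⟨d, rfl⟩ := Nat.exists_eq_add_of_le him
  rw [← suffix_suffix]
  exact xle_iff_of_t_eq Φ (Nat.le_sub_of_add_le' hm) hmt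

theorem fle_suffix_iff (Φ : TraceProp S) (hm : m ≤ π.n) :
    Fle c Φ (π.suffix m) ↔
      ∃ j, j ≤ π.n ∧ π.t m ≤ π.t j ∧ π.t j ≤ π.t m + c ∧ Φ (π.suffix j) := by
  constructor
  · rintro ⟨d, hd, hdt, hΦ⟩
    have hmd : m + d ≤ π.n := Nat.add_le_of_le_sub' hm hd
    rw [suffix_suffix] at hΦ
    exact ⟨m + d, hmd, π.strictMonoOn_t.monotoneOn hm hmd (Nat.le_add_right m d), hdt, hΦ⟩
  · rintro ⟨j, hj, hmj, hjt, hΦ⟩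
    obtain ⟨d, rfl⟩ := Nat.exists_eq_add_of_le ((π.strictMonoOn_t.le_iff_le hm hj).mp hmj)
    rw [← suffix_suffix] at hΦ
    exact ⟨d, Nat.le_sub_of_add_le' hj, hjt, hΦ⟩

theorem xle_fle_suffix_iff (Φ : TraceProp S) (ha : 0 ≤ a) (hi : i ≤ π.n)
    (hm : ∃ m, m ≤ π.n ∧ π.t m = π.t i + a) :
    Xle a (Fle c Φ) (π.suffix i) ↔
      ∃ j, j ≤ π.n ∧ π.t i + a ≤ π.t j ∧ π.t j ≤ π.t i + a + c ∧ Φ (π.suffix j) := by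
  obtain ⟨m, hmn, hmt⟩ := hm
  have him : i ≤ m := (π.strictMonoOn_t.le_iff_le hi hmn).mp (by linarith)
  rw [xle_suffix_iff_of_t_eq _ him hmn hmt, fle_suffix_iff Φ hmn, hmt]

end TTrace

theorem pattern_sliding_occurs_within_general {S : Type*} (π : TTrace S)
    (Φ1 Φ2 : TraceProp S) (a b k : ℝ) (ha : 0 ≤ a)
    (hm : ∀ i, i ≤ π.n → π.t i ≤ π.t 0 + (k - b) → Φ1 (π.suffix i) →
            ∃ m, m ≤ π.n ∧ π.t m = π.t i + a) :
    Gle (k - b) (pImp Φ1 (Xle a (Fle (b - a) Φ2))) π ↔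
      ∀ i, i ≤ π.n → π.t i ≤ π.t 0 + (k - b) → Φ1 (π.suffix i) →
        ∃ j, j ≤ π.n ∧ π.t i + a ≤ π.t j ∧ π.t j ≤ π.t i + b ∧ Φ2 (π.suffix j) := by
  refine forall₄_congr fun i hi hit hΦ1 => ?_
  rw [TTrace.xle_fle_suffix_iff Φ2 ha hi (hm i hi hit hΦ1), add_assoc, add_sub_cancel]

/-- translation correctness for the sliding-interval pattern
'whenever Ψ1 occurs, Ψ2 occurs within [a,b]':
`π ⊨ G_{≤k−b}(Ψ1 ⟹ X_{≤a} F_{≤b−a} Ψ2)` iff for every index `i` with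
`t i ≤ t 0 + (k − b)` at which `Ψ1 (s i)` holds, there exists an index `j` with
`t i + a ≤ t j ≤ t i + b` such that `Ψ2 (s j)`. -/
theorem pattern_sliding_occurs_within {S : Type*} (π : TTrace S)
    (Ψ1 Ψ2 : S → Prop) (a b k : ℝ) (ha : 0 ≤ a) (hab : a ≤ b) (hbk : b ≤ k)
    (hm : ∀ i, i ≤ π.n → π.t i ≤ π.t 0 + (k - b) →
            ∃ m, m ≤ π.n ∧ π.t m = π.t i + a) :
    Gle (k - b) (pImp (statePred Ψ1) (Xle a (Fle (b - a) (statePred Ψ2)))) π ↔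
      ∀ i, i ≤ π.n → π.t i ≤ π.t 0 + (k - b) → Ψ1 (π.s i) →
        ∃ j, j ≤ π.n ∧ π.t i + a ≤ π.t j ∧ π.t j ≤ π.t i + b ∧ Ψ2 (π.s j) :=
  pattern_sliding_occurs_within_general π (statePred Ψ1) (statePred Ψ2) a b k ha
    fun i hi hit _ => hm i hi hit
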